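/- Let X ⊆ P^1 × P^n be a finite set of distinct points having the (*)-property. Then X has the Cayley-Bacharach property if and only if X = X_1 × X_2 and X_2 ⊆ P^n is a Cayley-Bacharach scheme. -/

import Mathlib

/- Common setup: finite sets of points in the multiprojective space
   `P^m x P^n` over a field `K` of characteristic zero, their bihomogeneous
   vanishing ideals, bigraded Hilbert functions, Kähler differents,
   separators, Cayley-Bacharach property and complete intersections. -/

open MvPolynomial

set_option maxHeartbeats 1000000
set_option synthInstance.maxHeartbeats 400000

noncomputable section

namespace MultiProjPoints

variable (K : Type) [Field K] [CharZero K] [DecidableEq K]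

/-- The bigraded coordinate ring `S = K[X_0,…,X_m,Y_0,…,Y_n]` of `P^m × P^n`. -/
abbrev BiRing (m n : ℕ) : Type := MvPolynomial (Fin (m+1) ⊕ Fin (n+1)) K

/-- The weights giving the bigrading: `deg X_i = (1,0)`, `deg Y_j = (0,1)`. -/
def biwt (m n : ℕ) : (Fin (m+1) ⊕ Fin (n+1)) → ℤ × ℤ :=
  Sum.elim (fun _ => ((1 : ℤ), (0 : ℤ))) (fun _ => ((0 : ℤ), (1 : ℤ)))

variable {m n : ℕ}

/-- A (representative of a) point of `P^m × P^n`. -/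
abbrev BiPt (m n : ℕ) : Type := (Fin (m+1) → K) × (Fin (n+1) → K)

/-- `F` is bihomogeneous of degree `d`. -/
def IsBihom (F : BiRing K m n) (d : ℤ × ℤ) : Prop :=
  IsWeightedHomogeneous (biwt m n) F d

/-- Evaluation of a polynomial at (a representative of) a point. -/
def evalB (p : BiPt K m n) (F : BiRing K m n) : K :=
  eval (Sum.elim p.1 p.2) F

/-- A finset of representatives is a good configuration of points of
`P^m × P^n`: all representatives are nonzero, and proportional
representatives coincide (so distinct elements are distinct projective
points, and images under the two projections behave correctly). -/
def GoodConfig (𝕏 : Finset (BiPt K m n)) : Prop :=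
  (∀ p ∈ 𝕏, p.1 ≠ 0 ∧ p.2 ≠ 0) ∧
  (∀ p ∈ 𝕏, ∀ q ∈ 𝕏, (∃ c : K, c ≠ 0 ∧ p.1 = c • q.1) → p.1 = q.1) ∧
  (∀ p ∈ 𝕏, ∀ q ∈ 𝕏, (∃ c : K, c ≠ 0 ∧ p.2 = c • q.2) → p.2 = q.2)

/-- The bihomogeneous vanishing ideal `I_𝕏` of a set of points. -/
def vIdealB (𝕏 : Finset (BiPt K m n)) : Ideal (BiRing K m n) :=
  Ideal.span {F | (∃ d, IsBihom K F d) ∧ ∀ p ∈ 𝕏, evalB K p F = 0}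

/-- The bihomogeneous vanishing ideal of a single point. -/
def ptIdealB (p : BiPt K m n) : Ideal (BiRing K m n) :=
  Ideal.span {F | (∃ d, IsBihom K F d) ∧ evalB K p F = 0}

/-- The degree-`d` piece of `S/I`. -/
def degPieceB (I : Ideal (BiRing K m n)) (d : ℤ × ℤ) :
    Submodule K (BiRing K m n ⧸ I) :=
  (weightedHomogeneousSubmodule K (biwt m n) d).map
    (Ideal.Quotient.mkₐ K I).toLinearMap

/-- The Hilbert function of `S/I`. -/
def HFI (I : Ideal (BiRing K m n)) (d : ℤ × ℤ) : ℕ :=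
  Module.finrank K (degPieceB K I d)

/-- The Hilbert function of a set of points in `P^m × P^n`. -/
def HFB (𝕏 : Finset (BiPt K m n)) (d : ℤ × ℤ) : ℕ :=
  HFI K (vIdealB K 𝕏) d

/-- The Hilbert function of a (bihomogeneous) ideal `J` of `R_𝕏 = S/I`. -/
def HFIdealB (I : Ideal (BiRing K m n)) (J : Ideal (BiRing K m n ⧸ I))
    (d : ℤ × ℤ) : ℕ :=
  Module.finrank K ↥((Submodule.restrictScalars K J) ⊓ degPieceB K I d)

/- ### Single projective space `P^N` -/

/-- The coordinate ring `K[X_0,…,X_N]` of `P^N`. -/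
abbrev PRing (N : ℕ) : Type := MvPolynomial (Fin (N+1)) K

/-- The standard grading on `K[X_0,…,X_N]` (with values in `ℤ`). -/
def wt1 (N : ℕ) : Fin (N+1) → ℤ := fun _ => 1

/-- `F` is homogeneous of degree `d`. -/
def IsHom1 {N : ℕ} (F : PRing K N) (d : ℤ) : Prop :=
  IsWeightedHomogeneous (wt1 N) F d

/-- A good finite set of representatives of points in `P^N`. -/
def GoodSet {N : ℕ} (Y : Finset (Fin (N+1) → K)) : Prop :=
  (∀ q ∈ Y, q ≠ 0) ∧
  (∀ p ∈ Y, ∀ q ∈ Y, (∃ c : K, c ≠ 0 ∧ p = c • q) → p = q)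

/-- The homogeneous vanishing ideal of a set of points in `P^N`. -/
def vIdeal1 {N : ℕ} (Y : Finset (Fin (N+1) → K)) : Ideal (PRing K N) :=
  Ideal.span {F | (∃ d, IsHom1 K F d) ∧ ∀ q ∈ Y, eval q F = 0}

/-- The degree-`d` piece of `K[X_0,…,X_N]/I`. -/
def degPiece1 {N : ℕ} (I : Ideal (PRing K N)) (d : ℤ) :
    Submodule K (PRing K N ⧸ I) :=
  (weightedHomogeneousSubmodule K (wt1 N) d).map
    (Ideal.Quotient.mkₐ K I).toLinearMap

/-- The Hilbert function of a set of points in `P^N`. -/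
def HF1 {N : ℕ} (Y : Finset (Fin (N+1) → K)) (d : ℤ) : ℕ :=
  Module.finrank K (degPiece1 K (vIdeal1 K Y) d)

/-- The Hilbert function of a homogeneous ideal of `K[X_0,…,X_N]/I`. -/
def HFIdeal1 {N : ℕ} (I : Ideal (PRing K N)) (J : Ideal (PRing K N ⧸ I))
    (d : ℤ) : ℕ :=
  Module.finrank K ↥((Submodule.restrictScalars K J) ⊓ degPiece1 K I d)

/-- The degree `deg_Y(q)` of a point `q` in `Y ⊆ P^N`: the minimal degree of
a homogeneous separator of `q` in `Y`. -/
def deg1 {N : ℕ} (Y : Finset (Fin (N+1) → K)) (q : Fin (N+1) → K) : ℕ :=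
  sInf {d : ℕ | ∃ F : PRing K N, IsHom1 K F (d : ℤ) ∧ eval q F ≠ 0 ∧
    ∀ q' ∈ Y, q' ≠ q → eval q' F = 0}

/-- The regularity index of the Hilbert function of `Y ⊆ P^N`. -/
def regIndex1 {N : ℕ} (Y : Finset (Fin (N+1) → K)) : ℕ :=
  sInf {r : ℕ | ∀ i : ℕ, r ≤ i → HF1 K Y (i : ℤ) = Y.card}

/-- `Y ⊆ P^N` is a Cayley-Bacharach scheme. -/
def IsCB1 {N : ℕ} (Y : Finset (Fin (N+1) → K)) : Prop :=
  ∀ q ∈ Y, deg1 K Y q = regIndex1 K Y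

/- ### Kähler differents -/

/-- The variables `X_1,…,X_m,Y_1,…,Y_n` indexed by `Fin (m+n)`. -/
def bvar (m n : ℕ) (v : Fin (m+n)) : Fin (m+1) ⊕ Fin (n+1) :=
  if h : (v : ℕ) < m then Sum.inl ⟨(v : ℕ) + 1, by omega⟩
  else Sum.inr ⟨(v : ℕ) - m + 1, by have hv := v.isLt; omega⟩

/-- The Kähler different of `R = S/I` w.r.t. a system of generators `F` of
`I`: the ideal generated by the `(m+n)×(m+n)`-minors of the Jacobian matrix
`(∂F_k/∂X_i, ∂F_k/∂Y_j)`. -/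
def kdiffB (I : Ideal (BiRing K m n)) {r : ℕ} (F : Fin r → BiRing K m n) :
    Ideal (BiRing K m n ⧸ I) :=
  Ideal.span (Set.range fun ρ : Fin (m+n) → Fin r =>
    Ideal.Quotient.mk I (Matrix.det (Matrix.of fun u v : Fin (m+n) =>
      pderiv (bvar m n v) (F (ρ u)))))

/-- The Kähler different of `K[X_0,…,X_N]/I` w.r.t. a system of generators
`F` of `I` (minors w.r.t. the variables `X_1,…,X_N`). -/
def kdiff1 {N : ℕ} (I : Ideal (PRing K N)) {r : ℕ} (F : Fin r → PRing K N) :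
    Ideal (PRing K N ⧸ I) :=
  Ideal.span (Set.range fun ρ : Fin N → Fin r =>
    Ideal.Quotient.mk I (Matrix.det (Matrix.of fun u v : Fin N =>
      pderiv (Fin.succ v) (F (ρ u)))))

/-- The extension `ϑ_{𝕏₁} R_𝕏` to `R_𝕏 = S/I` of the Kähler different of
`𝕏₁ ⊆ P^m` computed from a system of generators `F` of `I_{𝕏₁}`. -/
def kdiffExtL (I : Ideal (BiRing K m n)) {r : ℕ} (F : Fin r → PRing K m) :
    Ideal (BiRing K m n ⧸ I) :=
  Ideal.span (Set.range fun ρ : Fin m → Fin r =>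
    Ideal.Quotient.mk I (rename Sum.inl (Matrix.det (Matrix.of fun u v : Fin m =>
      pderiv (Fin.succ v) (F (ρ u))))))

/-- The extension `ϑ_{𝕏₂} R_𝕏` to `R_𝕏 = S/I` of the Kähler different of
`𝕏₂ ⊆ P^n` computed from a system of generators `G` of `I_{𝕏₂}`. -/
def kdiffExtR (I : Ideal (BiRing K m n)) {r : ℕ} (G : Fin r → PRing K n) :
    Ideal (BiRing K m n ⧸ I) :=
  Ideal.span (Set.range fun ρ : Fin n → Fin r =>
    Ideal.Quotient.mk I (rename Sum.inr (Matrix.det (Matrix.of fun u v : Fin n =>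
      pderiv (Fin.succ v) (G (ρ u))))))

/- ### Regular sequences, ACM, complete intersections -/

/-- `a, b` form a regular sequence. -/
def RegPair {A : Type*} [CommRing A] (a b : A) : Prop :=
  (∀ z : A, a * z = 0 → z = 0) ∧
  (∀ z : A, b * z ∈ Ideal.span {a} → z ∈ Ideal.span {a})

/-- The image `x₀` of `X_0` in `S/I`. -/
def x0B (I : Ideal (BiRing K m n)) : BiRing K m n ⧸ I :=
  Ideal.Quotient.mk I (MvPolynomial.X (Sum.inl 0))

/-- The image `y₀` of `Y_0` in `S/I`. -/
def y0B (I : Ideal (BiRing K m n)) : BiRing K m n ⧸ I :=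
  Ideal.Quotient.mk I (MvPolynomial.X (Sum.inr 0))

/-- The standing assumption for ACM sets of points: (after a change of
coordinates) `x₀, y₀` form a regular sequence in `R_𝕏`. -/
def ACMxy (𝕏 : Finset (BiPt K m n)) : Prop :=
  RegPair (x0B K (vIdealB K 𝕏)) (y0B K (vIdealB K 𝕏))

/-- `𝕏` is arithmetically Cohen-Macaulay: some bihomogeneous linear forms
`ℓ` of degree `(1,0)` and `ℓ'` of degree `(0,1)` give a regular sequence in
`R_𝕏` (for points this is equivalent to `depth R_𝕏 = 2`). -/
def IsACM (𝕏 : Finset (BiPt K m n)) : Prop :=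
  ∃ l l' : BiRing K m n, IsBihom K l (1, 0) ∧ IsBihom K l' (0, 1) ∧
    RegPair (Ideal.Quotient.mk (vIdealB K 𝕏) l) (Ideal.Quotient.mk (vIdealB K 𝕏) l')

/-- A regular sequence in a commutative ring, given as a list:
each entry is a non-zerodivisor modulo the preceding ones, and the list
generates a proper ideal. -/
def IsRegSeq {A : Type*} [CommRing A] (l : List A) : Prop :=
  (∀ (i : ℕ) (h : i < l.length), ∀ z : A,
      l.get ⟨i, h⟩ * z ∈ Ideal.span {x | x ∈ l.take i} →
      z ∈ Ideal.span {x | x ∈ l.take i}) ∧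
  Ideal.span {x | x ∈ l} ≠ ⊤

/-- `𝕏` is a complete intersection of type `(d_1,…,d_m,d'_1,…,d'_n)`. -/
def IsCIB (𝕏 : Finset (BiPt K m n)) (d : Fin m → ℕ) (d' : Fin n → ℕ) : Prop :=
  ∃ (F : Fin m → BiRing K m n) (G : Fin n → BiRing K m n),
    (∀ i, IsBihom K (F i) ((d i : ℤ), 0)) ∧
    (∀ j, IsBihom K (G j) (0, (d' j : ℤ))) ∧
    IsRegSeq (List.ofFn F ++ List.ofFn G) ∧
    Ideal.span (Set.range F ∪ Set.range G) = vIdealB K 𝕏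

/-- `Y ⊆ P^N` is a complete intersection of type `(d_1,…,d_N)`. -/
def IsCI1 {N : ℕ} (Y : Finset (Fin (N+1) → K)) (d : Fin N → ℕ) : Prop :=
  ∃ F : Fin N → PRing K N,
    (∀ i, IsHom1 K (F i) (d i : ℤ)) ∧
    IsRegSeq (List.ofFn F) ∧
    Ideal.span (Set.range F) = vIdeal1 K Y

/- ### Separators and the Cayley-Bacharach property -/

/-- `F` is a separator of `p` in `𝕏`. -/
def IsSepB (𝕏 : Finset (BiPt K m n)) (p : BiPt K m n) (F : BiRing K m n) : Prop :=
  evalB K p F ≠ 0 ∧ ∀ q ∈ 𝕏, q ≠ p → evalB K q F = 0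

/-- The set of degrees of bihomogeneous separators of `p` in `𝕏`. -/
def sepDegsB (𝕏 : Finset (BiPt K m n)) (p : BiPt K m n) : Set (ℤ × ℤ) :=
  {d | ∃ F, IsBihom K F d ∧ IsSepB K 𝕏 p F}

/-- `deg_𝕏(p)`: the set of degrees of minimal separators of `p` in `𝕏`
(mimimality w.r.t. the componentwise order). -/
def minSepDegsB (𝕏 : Finset (BiPt K m n)) (p : BiPt K m n) : Set (ℤ × ℤ) :=
  {d ∈ sepDegsB K 𝕏 p | ∀ d' ∈ sepDegsB K 𝕏 p, ¬ d' < d}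

/-- `𝕏` has the Cayley-Bacharach property: the Hilbert function of
`𝕏 \ {p}` is independent of the choice of `p ∈ 𝕏`. -/
def HasCB (𝕏 : Finset (BiPt K m n)) : Prop :=
  ∀ p ∈ 𝕏, ∀ q ∈ 𝕏, ∀ d : ℤ × ℤ, HFB K (𝕏.erase p) d = HFB K (𝕏.erase q) d

/- ### Star property and fibres -/

/-- The `(⋆)`-property. -/
def StarProp (𝕏 : Finset (BiPt K m n)) : Prop :=
  ∀ p ∈ 𝕏, ∀ q ∈ 𝕏, ((p.1, q.2) ∈ 𝕏 ∨ (q.1, p.2) ∈ 𝕏)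

/-- `V_j = π₁(π₂⁻¹(q'_j) ∩ 𝕏)` for `q'_j = p.2`. -/
def Vset (𝕏 : Finset (BiPt K m n)) (p : BiPt K m n) : Finset (Fin (m+1) → K) :=
  (𝕏.filter fun q => q.2 = p.2).image Prod.fst

/-- `W_i = π₂(π₁⁻¹(q_i) ∩ 𝕏)` for `q_i = p.1`. -/
def Wset (𝕏 : Finset (BiPt K m n)) (p : BiPt K m n) : Finset (Fin (n+1) → K) :=
  (𝕏.filter fun q => q.1 = p.1).image Prod.snd

end MultiProjPoints

namespace CBAux

set_option linter.unusedSectionVars false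

open MultiProjPoints

/- ### Linear algebra -/

theorem finrank_map_congr {K M N P : Type*} [Field K] [AddCommGroup M] [Module K M]
    [AddCommGroup N] [Module K N] [AddCommGroup P] [Module K P]
    (A : Submodule K M) (f : M →ₗ[K] N) (g : M →ₗ[K] P)
    (h : ∀ x ∈ A, f x = 0 ↔ g x = 0) :
    Module.finrank K (A.map f) = Module.finrank K (A.map g) := by
  have hk : LinearMap.ker (f.domRestrict A) = LinearMap.ker (g.domRestrict A) := by
    ext x
    simpa using h x x.2
  have e1 := (f.domRestrict A).quotKerEquivRange.finrank_eq
  have e2 := (g.domRestrict A).quotKerEquivRange.finrank_eq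
  rw [LinearMap.range_domRestrict] at e1 e2
  rw [← e1, ← e2, hk]

/-- joint evaluation on a finite set -/
def evX {K M α : Type*} [Field K] [AddCommGroup M] [Module K M]
    (φ : α → M →ₗ[K] K) (X : Finset α) : M →ₗ[K] (X → K) :=
  LinearMap.pi fun x => φ x

theorem evX_erase {K M α : Type*} [Field K] [AddCommGroup M] [Module K M] [DecidableEq α]
    (φ : α → M →ₗ[K] K) (X : Finset α) (A : Submodule K M) (p : α) (hp : p ∈ X) :
    ((∃ F ∈ A, φ p F ≠ 0 ∧ ∀ q ∈ X, q ≠ p → φ q F = 0) →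
      Module.finrank K (A.map (evX φ (X.erase p))) + 1 = Module.finrank K (A.map (evX φ X))) ∧
    ((¬ ∃ F ∈ A, φ p F ≠ 0 ∧ ∀ q ∈ X, q ≠ p → φ q F = 0) →
      Module.finrank K (A.map (evX φ (X.erase p))) = Module.finrank K (A.map (evX φ X))) := by
  let ρ : (X → K) →ₗ[K] ({x // x ∈ X.erase p} → K) :=
    LinearMap.funLeft K K (fun x => ⟨x.1, Finset.mem_of_mem_erase x.2⟩)
  have hcomp : evX φ (X.erase p) = ρ ∘ₗ evX φ X := rfl
  have hmap : A.map (evX φ (X.erase p)) = (A.map (evX φ X)).map ρ := by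
    rw [hcomp, Submodule.map_comp]
  have hrn := LinearMap.finrank_range_add_finrank_ker (ρ.domRestrict (A.map (evX φ X)))
  rw [LinearMap.range_domRestrict, ← hmap] at hrn
  have hker : ∀ u : X → K, ρ u = 0 → ∀ x : X, x.1 ≠ p → u x = 0 := by
    intro u hu x hx
    exact congrFun hu ⟨x.1, Finset.mem_erase.2 ⟨hx, x.2⟩⟩
  constructor
  · rintro ⟨F, hF, hFp, hFq⟩
    have : Module.finrank K (LinearMap.ker (ρ.domRestrict (A.map (evX φ X)))) = 1 := by
      have hmem : (⟨evX φ X F, Submodule.mem_map_of_mem hF⟩ : A.map (evX φ X)) ∈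
          LinearMap.ker (ρ.domRestrict (A.map (evX φ X))) := by
        rw [LinearMap.mem_ker]
        funext x
        exact hFq x.1 (Finset.mem_of_mem_erase x.2) (Finset.ne_of_mem_erase x.2)
      let v : LinearMap.ker (ρ.domRestrict (A.map (evX φ X))) := ⟨_, hmem⟩
      refine _root_.finrank_eq_one v ?_ ?_
      · intro h0
        have h1 : evX φ X F = 0 := by
          exact congrArg (fun z => z.1.1) h0
        exact hFp (congrFun h1 ⟨p, hp⟩)
      · rintro ⟨⟨u, hu⟩, hu0⟩
        refine ⟨u ⟨p, hp⟩ / φ p F, ?_⟩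
        apply Subtype.ext
        apply Subtype.ext
        funext x
        change u ⟨p, hp⟩ / φ p F * φ x.1 F = u x
        by_cases hx : x.1 = p
        · obtain ⟨x, hxX⟩ := x
          simp only at hx
          subst hx
          field_simp
        · rw [hFq x.1 x.2 hx, hker u (LinearMap.mem_ker.1 hu0) x hx, mul_zero]
    omega
  · intro hno
    have : LinearMap.ker (ρ.domRestrict (A.map (evX φ X))) = ⊥ := by
      rw [Submodule.eq_bot_iff]
      rintro ⟨u, hu⟩ hu0
      apply Subtype.ext
      obtain ⟨F, hF, rfl⟩ := hu
      funext x
      change φ x.1 F = 0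
      have hz : ∀ q ∈ X, q ≠ p → φ q F = 0 := fun q hq hqp =>
        hker (evX φ X F) (LinearMap.mem_ker.1 hu0) ⟨q, hq⟩ hqp
      by_cases hx : x.1 = p
      · by_contra hne
        exact hno ⟨F, hF, hx ▸ hne, hz⟩
      · exact hz _ x.2 hx
    rw [this, finrank_bot] at hrn
    omega

theorem evX_full {K M α : Type*} [Field K] [AddCommGroup M] [Module K M] [DecidableEq α]
    (φ : α → M →ₗ[K] K) (X : Finset α) (A : Submodule K M) :
    Module.finrank K (A.map (evX φ X)) = X.card ↔
      ∀ p ∈ X, ∃ F ∈ A, φ p F ≠ 0 ∧ ∀ q ∈ X, q ≠ p → φ q F = 0 := by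
  have hc : Module.finrank K (X → K) = X.card := by simp
  constructor
  · intro h p hp
    have htop : A.map (evX φ X) = ⊤ := Submodule.eq_top_of_finrank_eq (h.trans hc.symm)
    have : (Pi.single ⟨p, hp⟩ 1 : X → K) ∈ A.map (evX φ X) := by rw [htop]; trivial
    obtain ⟨F, hF, hFe⟩ := this
    refine ⟨F, hF, ?_, ?_⟩
    · have := congrFun hFe ⟨p, hp⟩
      change φ p F = _ at this
      rw [this]; simp
    · intro q hq hqp
      have := congrFun hFe ⟨q, hq⟩
      change φ q F = _ at this
      rw [this, Pi.single_eq_of_ne]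
      simpa [Subtype.ext_iff] using hqp
  · intro h
    have htop : A.map (evX φ X) = ⊤ := by
      rw [eq_top_iff]
      intro u _
      rw [← Finset.univ_sum_single u]
      refine Submodule.sum_mem _ fun x _ => ?_
      obtain ⟨F, hF, hFp, hFq⟩ := h x.1 x.2
      have : Pi.single x (u x) = (u x / φ x.1 F) • evX φ X F := by
        funext y
        change _ = u x / φ x.1 F * φ y.1 F
        by_cases hy : y = x
        · subst hy; simp; field_simp
        · rw [Pi.single_eq_of_ne hy, hFq y.1 y.2 (fun h => hy (Subtype.ext h)), mul_zero]
      rw [this]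
      exact Submodule.smul_mem _ _ (Submodule.mem_map_of_mem hF)
    rw [htop, finrank_top, hc]

/- ### Hilbert functions via evaluation -/

section
variable (K : Type) [Field K] [CharZero K] [DecidableEq K] {m n N : ℕ}

/-- evaluation as a linear map -/
def evL {σ : Type*} (x : σ → K) : MvPolynomial σ K →ₗ[K] K := (aeval x).toLinearMap

theorem evL_apply {σ : Type*} (x : σ → K) (F : MvPolynomial σ K) : evL K x F = eval x F := by
  simp [evL, aeval_eq_eval]

def phiB (p : BiPt K m n) : BiRing K m n →ₗ[K] K := evL K (Sum.elim p.1 p.2)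

theorem phiB_apply (p : BiPt K m n) (F : BiRing K m n) : phiB K p F = evalB K p F :=
  evL_apply K _ F

theorem HFB_eq (𝕏 : Finset (BiPt K m n)) (d : ℤ × ℤ) :
    HFB K 𝕏 d = Module.finrank K
      ((weightedHomogeneousSubmodule K (biwt m n) d).map (evX (phiB K) 𝕏)) := by
  unfold HFB HFI degPieceB
  apply finrank_map_congr
  intro F hF
  have h1 : (Ideal.Quotient.mkₐ K (vIdealB K 𝕏)).toLinearMap F = 0 ↔ F ∈ vIdealB K 𝕏 := by
    simp [Ideal.Quotient.eq_zero_iff_mem]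
  have h2 : evX (phiB K) 𝕏 F = 0 ↔ ∀ p ∈ 𝕏, evalB K p F = 0 := by
    constructor
    · intro h p hp
      rw [← phiB_apply]
      exact congrFun h ⟨p, hp⟩
    · intro h
      funext x
      exact (phiB_apply K _ F).trans (h x.1 x.2)
  rw [h1, h2]
  constructor
  · intro h p hp
    have hle : vIdealB K 𝕏 ≤ RingHom.ker (eval (Sum.elim p.1 p.2) : BiRing K m n →+* K) :=
      Ideal.span_le.2 fun G hG => hG.2 p hp
    exact hle h
  · intro h
    exact Ideal.subset_span ⟨⟨d, hF⟩, h⟩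

theorem HF1_eq (Y : Finset (Fin (N+1) → K)) (d : ℤ) :
    HF1 K Y d = Module.finrank K
      ((weightedHomogeneousSubmodule K (wt1 N) d).map (evX (evL K) Y)) := by
  unfold HF1 degPiece1
  apply finrank_map_congr
  intro F hF
  have h1 : (Ideal.Quotient.mkₐ K (vIdeal1 K Y)).toLinearMap F = 0 ↔ F ∈ vIdeal1 K Y := by
    simp [Ideal.Quotient.eq_zero_iff_mem]
  have h2 : evX (evL K) Y F = 0 ↔ ∀ p ∈ Y, eval p F = 0 := by
    constructor
    · intro h p hp
      rw [← evL_apply]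
      exact congrFun h ⟨p, hp⟩
    · intro h
      funext x
      exact (evL_apply K _ F).trans (h x.1 x.2)
  rw [h1, h2]
  constructor
  · intro h p hp
    have hle : vIdeal1 K Y ≤ RingHom.ker (eval p : PRing K N →+* K) :=
      Ideal.span_le.2 fun G hG => hG.2 p hp
    exact hle h
  · intro h
    exact Ideal.subset_span ⟨⟨d, hF⟩, h⟩

theorem hasCB_iff (𝕏 : Finset (BiPt K m n)) :
    HasCB K 𝕏 ↔ ∀ p ∈ 𝕏, ∀ q ∈ 𝕏, sepDegsB K 𝕏 p = sepDegsB K 𝕏 q := by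
  have key : ∀ p ∈ 𝕏, ∀ d, (d ∈ sepDegsB K 𝕏 p → HFB K (𝕏.erase p) d + 1 = HFB K 𝕏 d) ∧
      (d ∉ sepDegsB K 𝕏 p → HFB K (𝕏.erase p) d = HFB K 𝕏 d) := by
    intro p hp d
    have := evX_erase (phiB K) 𝕏 (weightedHomogeneousSubmodule K (biwt m n) d) p hp
    rw [← HFB_eq, ← HFB_eq] at this
    simp only [phiB_apply] at this
    exact this
  constructor
  · intro h p hp q hq
    ext d
    have h1 := key p hp d
    have h2 := key q hq d
    have h3 := h p hp q hq d
    by_cases hpd : d ∈ sepDegsB K 𝕏 p <;> by_cases hqd : d ∈ sepDegsB K 𝕏 q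
    · simp [hpd, hqd]
    · have := h1.1 hpd; have := h2.2 hqd; omega
    · have := h1.2 hpd; have := h2.1 hqd; omega
    · simp [hpd, hqd]
  · intro h p hp q hq d
    have h1 := key p hp d
    have h2 := key q hq d
    have h3 := h p hp q hq
    by_cases hpd : d ∈ sepDegsB K 𝕏 p
    · have := h1.1 hpd; have := h2.1 (h3 ▸ hpd); omega
    · have := h1.2 hpd; have := h2.2 (h3 ▸ hpd); omega

/-- `d` is the degree of a homogeneous separator of `q` in `Y`. -/
def Sep1 (Y : Finset (Fin (N+1) → K)) (q : Fin (N+1) → K) (d : ℤ) : Prop :=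
  ∃ F : PRing K N, IsHom1 K F d ∧ eval q F ≠ 0 ∧ ∀ q' ∈ Y, q' ≠ q → eval q' F = 0

theorem HF1_full (Y : Finset (Fin (N+1) → K)) (d : ℤ) :
    HF1 K Y d = Y.card ↔ ∀ q ∈ Y, Sep1 K Y q d := by
  rw [HF1_eq, evX_full]
  simp only [evL_apply]
  rfl

/- ### Homogeneity -/

theorem aeval_wh {σ τ : Type*} {M M' : Type*} [AddCommMonoid M] [AddCommMonoid M']
    (w : σ → M) (w' : τ → M') (φ : M →+ M') (g : σ → MvPolynomial τ K)
    (hg : ∀ i, IsWeightedHomogeneous w' (g i) (φ (w i))) (F : MvPolynomial σ K) (d : M)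
    (hF : IsWeightedHomogeneous w F d) : IsWeightedHomogeneous w' (aeval g F) (φ d) := by
  rw [aeval_def, eval₂_eq]
  refine IsWeightedHomogeneous.sum _ _ _ fun s hs => ?_
  rw [MvPolynomial.algebraMap_eq]
  apply IsWeightedHomogeneous.C_mul
  have hw := hF (mem_support_iff.1 hs)
  have : φ d = ∑ i ∈ s.support, s i • φ (w i) := by
    rw [← hw, Finsupp.weight_apply, Finsupp.sum, map_sum]
    simp
  rw [this]
  exact IsWeightedHomogeneous.prod _ _ _ fun i _ => (hg i).pow _

theorem hom1_nonneg {F : PRing K N} {d : ℤ} (hF : IsHom1 K F d) (h0 : F ≠ 0) :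
    0 ≤ d ∧ F.IsHomogeneous d.toNat := by
  have hw : ∀ s : Fin (N+1) →₀ ℕ, coeff s F ≠ 0 → ((s.degree : ℕ) : ℤ) = d := by
    intro s hs
    have := hF hs
    rw [← this, Finsupp.weight_apply, Finsupp.degree_apply, Finsupp.sum]
    simp [wt1]
  obtain ⟨s, hs⟩ := MvPolynomial.ne_zero_iff.1 h0
  have hd : 0 ≤ d := by rw [← hw s hs]; positivity
  refine ⟨hd, fun s hs => ?_⟩
  have h1 := hw s hs
  have h2 : Finsupp.weight (1 : Fin (N+1) → ℕ) s = s.degree := by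
    rw [Finsupp.degree_eq_weight_one]
    rfl
  rw [h2]
  omega

theorem eval_smul_zero {F : PRing K N} {d : ℤ} (hF : IsHom1 K F d) (c : K)
    (r : Fin (N+1) → K) (hr : eval r F = 0) : eval (c • r) F = 0 := by
  by_cases h0 : F = 0
  · simp [h0]
  obtain ⟨_, hh⟩ := hom1_nonneg K hF h0
  have : eval (c • r) F = c ^ d.toNat * eval r F := by
    rw [eval_eq, eval_eq, Finset.mul_sum]
    refine Finset.sum_congr rfl fun s hs => ?_
    have h1 := hh (mem_support_iff.1 hs)
    rw [Finsupp.weight_apply, Finsupp.sum] at h1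
    simp only [Pi.one_apply, smul_eq_mul, mul_one] at h1
    simp only [Pi.smul_apply, smul_eq_mul, mul_pow, Finset.prod_mul_distrib,
      Finset.prod_pow_eq_pow_sum, h1]
    ring
  rw [this, hr, mul_zero]

theorem sep1_nonneg {Y : Finset (Fin (N+1) → K)} {q : Fin (N+1) → K} {d : ℤ}
    (h : Sep1 K Y q d) : 0 ≤ d := by
  obtain ⟨F, hF, hq, _⟩ := h
  refine (hom1_nonneg K hF ?_).1
  rintro rfl
  simp at hq

theorem sep1_mono {Y : Finset (Fin (N+1) → K)} {q : Fin (N+1) → K} (hq0 : q ≠ 0) {d e : ℤ}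
    (h : Sep1 K Y q d) (hde : d ≤ e) : Sep1 K Y q e := by
  obtain ⟨F, hF, hq, hY⟩ := h
  obtain ⟨i, hi⟩ := Function.ne_iff.1 hq0
  refine ⟨F * X i ^ (e - d).toNat, ?_, ?_, ?_⟩
  · have h1 : IsWeightedHomogeneous (wt1 N) (X i ^ (e - d).toNat : PRing K N)
        ((e - d).toNat • (1 : ℤ)) := (isWeightedHomogeneous_X K (wt1 N) i).pow _
    have h2 := IsWeightedHomogeneous.mul hF h1
    have : d + (e - d).toNat • (1 : ℤ) = e := by simp; omega
    rwa [this] at h2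
  · simpa using ⟨hq, fun h => absurd h hi⟩
  · intro q' h1 h2
    simp [hY q' h1 h2]

theorem sep1_exists {Y : Finset (Fin (N+1) → K)} {q : Fin (N+1) → K} (hY : GoodSet K Y)
    (hq : q ∈ Y) : Sep1 K Y q ((Y.card : ℤ) - 1) := by
  have hl : ∀ r ∈ Y.erase q, ∃ l : PRing K N, IsHom1 K l 1 ∧ eval q l ≠ 0 ∧ eval r l = 0 := by
    intro r hr
    by_contra hcon
    push Not at hcon
    have hrY := Finset.mem_of_mem_erase hr
    obtain ⟨i, hi⟩ := Function.ne_iff.1 (hY.1 r hrY)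
    have key : ∀ j, q j * r i = q i * r j := by
      intro j
      by_contra hne
      refine hcon (C (r i) * X j - C (r j) * X i) ?_ ?_ ?_
      · exact ((isWeightedHomogeneous_X K (wt1 N) j).C_mul _).sub
          ((isWeightedHomogeneous_X K (wt1 N) i).C_mul _)
      · simp only [map_sub, map_mul, eval_C, eval_X, sub_ne_zero]
        intro h; apply hne; linear_combination h
      · simp only [map_sub, map_mul, eval_C, eval_X]; ring
    have hi' : r i ≠ 0 := hi
    have heq : q = (q i / r i) • r := by
      funext j
      simp only [Pi.smul_apply, smul_eq_mul]
      field_simp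
      exact key j
    have hc : q i / r i ≠ 0 := by
      intro h
      rw [h, zero_smul] at heq
      exact hY.1 q hq heq
    exact Finset.ne_of_mem_erase hr (hY.2 q hq r hrY ⟨_, hc, heq⟩).symm
  choose! l hl1 hl2 hl3 using hl
  refine ⟨∏ r ∈ Y.erase q, l r, ?_, ?_, ?_⟩
  · have := IsWeightedHomogeneous.prod (Y.erase q) l (fun _ => (1 : ℤ)) (w := wt1 N) hl1
    have hc : ∑ r ∈ Y.erase q, (1 : ℤ) = (Y.card : ℤ) - 1 := by
      have := Finset.card_erase_add_one hq
      simp only [Finset.sum_const, nsmul_eq_mul, mul_one]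
      omega
    rwa [hc] at this
  · rw [map_prod]
    exact Finset.prod_ne_zero_iff.2 hl2
  · intro r hr hrq
    rw [map_prod]
    have hm : r ∈ Y.erase q := Finset.mem_erase.2 ⟨hrq, hr⟩
    exact Finset.prod_eq_zero hm (hl3 r hm)

theorem sep1_iff_deg1 {Y : Finset (Fin (N+1) → K)} {q : Fin (N+1) → K} (hY : GoodSet K Y)
    (hq : q ∈ Y) (d : ℤ) : Sep1 K Y q d ↔ (deg1 K Y q : ℤ) ≤ d := by
  have hmem : deg1 K Y q ∈ {d : ℕ | Sep1 K Y q (d : ℤ)} := by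
    apply Nat.sInf_mem
    have h := sep1_exists K hY hq
    refine ⟨((Y.card : ℤ) - 1).toNat, ?_⟩
    have h0 := sep1_nonneg K h
    rw [Set.mem_ofPred_eq, Int.toNat_of_nonneg h0]
    exact h
  constructor
  · intro h
    have h0 := sep1_nonneg K h
    have : deg1 K Y q ≤ d.toNat := by
      apply Nat.sInf_le
      change Sep1 K Y q _
      rwa [Int.toNat_of_nonneg h0]
    omega
  · intro h
    exact sep1_mono K (hY.1 q hq) hmem h

theorem prop_of_det {u r : Fin 2 → K} (hu : u ≠ 0) (hr : r ≠ 0)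
    (h : u 0 * r 1 = u 1 * r 0) : ∃ c : K, c ≠ 0 ∧ u = c • r := by
  have : ∃ c : K, u = c • r := by
    by_cases h0 : r 0 = 0
    · have h1 : r 1 ≠ 0 := by
        intro h1; apply hr; funext i; fin_cases i <;> simp [h0, h1]
      refine ⟨u 1 / r 1, ?_⟩
      funext i
      fin_cases i
      · simp only [h0, mul_zero] at h
        simp [h0, (mul_eq_zero.1 h).resolve_right h1]
      · simp; field_simp
    · refine ⟨u 0 / r 0, ?_⟩
      funext i
      fin_cases i
      · simp; field_simp
      · simp; field_simp; linear_combination -h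
  obtain ⟨c, hc⟩ := this
  refine ⟨c, ?_, hc⟩
  rintro rfl
  exact hu (by simpa using hc)

theorem sep1_P1 {Y : Finset (Fin (1+1) → K)} {q : Fin (1+1) → K} (hY : GoodSet K Y)
    (hq : q ∈ Y) (d : ℤ) : Sep1 K Y q d ↔ (Y.card : ℤ) - 1 ≤ d := by
  constructor
  swap
  · exact sep1_mono K (hY.1 q hq) (sep1_exists K hY hq)
  rintro ⟨F, hF, hFq, hFY⟩
  have hF0 : F ≠ 0 := by rintro rfl; simp at hFq
  obtain ⟨hd, hh⟩ := hom1_nonneg K hF hF0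
  -- a direction avoiding all points of `Y`
  obtain ⟨w, hw⟩ : ∃ w : Fin 2 → K, ∀ r ∈ Y, w 0 * r 1 - w 1 * r 0 ≠ 0 := by
    obtain ⟨t, ht⟩ := Infinite.exists_notMem_finset (Y.image fun r => r 0 / r 1)
    by_cases hall : ∀ r ∈ Y, r 1 ≠ 0
    · refine ⟨![t, 1], fun r hr h => ht (Finset.mem_image.2 ⟨r, hr, ?_⟩)⟩
      have := hall r hr
      simp at h
      field_simp
      linear_combination -h
    · push Not at hall
      obtain ⟨r0, hr0, hr01⟩ := hall
      obtain ⟨t, ht⟩ := Infinite.exists_notMem_finset (insert 0 (Y.image fun r => r 0 / r 1))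
      rw [Finset.mem_insert, not_or] at ht
      refine ⟨![t, 1], fun r hr h => ?_⟩
      simp at h
      by_cases h1 : r 1 = 0
      · have h2 : r 0 = 0 := by simpa [h1] using h
        apply hY.1 r hr
        funext i; fin_cases i <;> simp [h1, h2]
      · apply ht.2 (Finset.mem_image.2 ⟨r, hr, ?_⟩)
        field_simp
        linear_combination -h
  let g : Fin 2 → Polynomial K := fun i => Polynomial.C (w i) * Polynomial.X + Polynomial.C (q i)
  let h : Polynomial K := aeval g F
  have heval : ∀ s : K, h.eval s = eval (q + s • w) F := by
    intro s
    have : (Polynomial.aeval s) (aeval g F) = aeval (fun i => Polynomial.aeval s (g i)) F := by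
      rw [← MvPolynomial.comp_aeval_apply]
    rw [Polynomial.coe_aeval_eq_eval] at this
    change Polynomial.eval s (aeval g F) = _
    rw [this, aeval_eq_eval]
    congr 2
    funext i
    simp [g]; ring
  have h0 : h ≠ 0 := by
    intro h0
    have := heval 0
    rw [h0] at this
    simp at this
    exact hFq this.symm
  have hdeg : h.natDegree ≤ d.toNat := by
    have := MvPolynomial.aeval_natDegree_le F hh.totalDegree_le g
      (n := 1) (fun i => Polynomial.natDegree_linear_le)
    simpa using this
  let s : (Fin 2 → K) → K := fun r => -(q 0 * r 1 - q 1 * r 0) / (w 0 * r 1 - w 1 * r 0)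
  have hs : ∀ r ∈ Y, q + s r • w ≠ 0 ∧ ∃ c : K, c ≠ 0 ∧ q + s r • w = c • r := by
    intro r hr
    have hne : q + s r • w ≠ 0 := by
      intro he
      have e0 := congrFun he 0
      have e1 := congrFun he 1
      simp at e0 e1
      apply hw q hq
      by_cases hs0 : s r = 0
      · exfalso
        apply hY.1 q hq
        funext i; fin_cases i
        · simpa [hs0] using e0
        · simpa [hs0] using e1
      · apply mul_left_cancel₀ hs0
        linear_combination q 1 * e0 - q 0 * e1
    refine ⟨hne, prop_of_det K hne (hY.1 r hr) ?_⟩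
    have := hw r hr
    have hsr : s r * (w 0 * r 1 - w 1 * r 0) = -(q 0 * r 1 - q 1 * r 0) :=
      div_mul_cancel₀ _ this
    simp only [Pi.add_apply, Pi.smul_apply, smul_eq_mul]
    linear_combination hsr
  have hinj : Set.InjOn s (Y.erase q) := by
    intro r hr r' hr' he
    have hr := Finset.mem_of_mem_erase hr
    have hr' := Finset.mem_of_mem_erase hr'
    obtain ⟨_, c, hc, e1⟩ := hs r hr
    obtain ⟨_, c', hc', e2⟩ := hs r' hr'
    rw [← he, e1] at e2
    refine hY.2 r hr r' hr' ⟨c⁻¹ * c', by positivity, ?_⟩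
    rw [mul_smul, ← e2, smul_smul, inv_mul_cancel₀ hc, one_smul]
  have hroots : (Y.erase q).image s ⊆ h.roots.toFinset := by
    intro z hz
    obtain ⟨r, hr, rfl⟩ := Finset.mem_image.1 hz
    obtain ⟨_, c, hc, e⟩ := hs r (Finset.mem_of_mem_erase hr)
    rw [Multiset.mem_toFinset, Polynomial.mem_roots h0, Polynomial.IsRoot, heval, e]
    exact eval_smul_zero K hF c r
      (hFY r (Finset.mem_of_mem_erase hr) (Finset.ne_of_mem_erase hr))
  have h1 := Finset.card_le_card hroots
  rw [Finset.card_image_of_injOn hinj] at h1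
  have h2 := h.roots.toFinset_card_le
  have h3 := h.card_roots'
  have h4 := Finset.card_erase_add_one hq
  omega

/- ### Bihomogeneous separators -/

theorem good_V {𝕏 : Finset (BiPt K m n)} (hg : GoodConfig K 𝕏) (p : BiPt K m n) :
    GoodSet K (Vset K 𝕏 p) := by
  constructor
  · intro q hq
    simp only [Vset, Finset.mem_image, Finset.mem_filter] at hq
    obtain ⟨a, ⟨ha, _⟩, rfl⟩ := hq
    exact (hg.1 a ha).1
  · intro q hq r hr
    simp only [Vset, Finset.mem_image, Finset.mem_filter] at hq hr
    obtain ⟨a, ⟨ha, _⟩, rfl⟩ := hq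
    obtain ⟨b, ⟨hb, _⟩, rfl⟩ := hr
    exact hg.2.1 a ha b hb

theorem good_2 {𝕏 : Finset (BiPt K m n)} (hg : GoodConfig K 𝕏) :
    GoodSet K (𝕏.image Prod.snd) := by
  constructor
  · intro q hq
    obtain ⟨a, ha, rfl⟩ := Finset.mem_image.1 hq
    exact (hg.1 a ha).2
  · intro q hq r hr
    obtain ⟨a, ha, rfl⟩ := Finset.mem_image.1 hq
    obtain ⟨b, hb, rfl⟩ := Finset.mem_image.1 hr
    exact hg.2.2 a ha b hb

theorem mem_V {𝕏 : Finset (BiPt K m n)} {p : BiPt K m n} {r : Fin (m+1) → K} :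
    r ∈ Vset K 𝕏 p ↔ (r, p.2) ∈ 𝕏 := by
  simp [Vset]

theorem mem_W {𝕏 : Finset (BiPt K m n)} {p : BiPt K m n} {r : Fin (n+1) → K} :
    r ∈ Wset K 𝕏 p ↔ (p.1, r) ∈ 𝕏 := by
  simp [Wset]

theorem mem_sepDegs {𝕏 : Finset (BiPt K m n)} (hstar : StarProp K 𝕏) {p : BiPt K m n}
    (hp : p ∈ 𝕏) (d : ℤ × ℤ) :
    d ∈ sepDegsB K 𝕏 p ↔ Sep1 K (Vset K 𝕏 p) p.1 d.1 ∧ Sep1 K (Wset K 𝕏 p) p.2 d.2 := by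
  constructor
  · rintro ⟨F, hF, hFp, hFq⟩
    constructor
    · let g : Fin (m+1) ⊕ Fin (n+1) → PRing K m := Sum.elim X (fun j => C (p.2 j))
      have hev : ∀ r, eval r (aeval g F) = evalB K (r, p.2) F := by
        intro r
        have : (aeval r) (aeval g F) = aeval (fun i => aeval r (g i)) F := by
          rw [← MvPolynomial.comp_aeval_apply]
        rw [aeval_eq_eval, aeval_eq_eval] at this
        refine this.trans ?_
        unfold evalB
        congr 2
        funext i
        rcases i with i | i <;> simp [g]
      refine ⟨aeval g F, ?_, ?_, ?_⟩
      · refine aeval_wh K (biwt m n) (wt1 m) (AddMonoidHom.fst ℤ ℤ) g ?_ F d hF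
        rintro (i | i)
        · exact isWeightedHomogeneous_X K (wt1 m) i
        · exact isWeightedHomogeneous_C (wt1 m) _
      · rw [hev]; exact hFp
      · intro r hr hrp
        rw [hev]
        exact hFq _ ((mem_V K).1 hr) (fun h => hrp (congrArg Prod.fst h))
    · let g : Fin (m+1) ⊕ Fin (n+1) → PRing K n := Sum.elim (fun j => C (p.1 j)) X
      have hev : ∀ r, eval r (aeval g F) = evalB K (p.1, r) F := by
        intro r
        have : (aeval r) (aeval g F) = aeval (fun i => aeval r (g i)) F := by
          rw [← MvPolynomial.comp_aeval_apply]
        rw [aeval_eq_eval, aeval_eq_eval] at this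
        refine this.trans ?_
        unfold evalB
        congr 2
        funext i
        rcases i with i | i <;> simp [g]
      refine ⟨aeval g F, ?_, ?_, ?_⟩
      · refine aeval_wh K (biwt m n) (wt1 n) (AddMonoidHom.snd ℤ ℤ) g ?_ F d hF
        rintro (i | i)
        · exact isWeightedHomogeneous_C (wt1 n) _
        · exact isWeightedHomogeneous_X K (wt1 n) i
      · rw [hev]; exact hFp
      · intro r hr hrp
        rw [hev]
        exact hFq _ ((mem_W K).1 hr) (fun h => hrp (congrArg Prod.snd h))
  · rintro ⟨⟨f, hf, hfp, hfV⟩, ⟨g, hg, hgp, hgW⟩⟩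
    have ev1 : ∀ r : BiPt K m n, evalB K r (rename Sum.inl f * rename Sum.inr g)
        = eval r.1 f * eval r.2 g := by
      intro r
      simp [evalB, eval_rename]
    refine ⟨rename Sum.inl f * rename Sum.inr g, ?_, ?_, ?_⟩
    · have h1 := aeval_wh K (wt1 m) (biwt m n) (AddMonoidHom.inl ℤ ℤ)
        (fun i => X (Sum.inl i)) (fun i => isWeightedHomogeneous_X K (biwt m n) (Sum.inl i)) f _ hf
      have h2 := aeval_wh K (wt1 n) (biwt m n) (AddMonoidHom.inr ℤ ℤ)
        (fun i => X (Sum.inr i)) (fun i => isWeightedHomogeneous_X K (biwt m n) (Sum.inr i)) g _ hg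
      have h3 := h1.mul h2
      have hd : AddMonoidHom.inl ℤ ℤ d.1 + AddMonoidHom.inr ℤ ℤ d.2 = d := by
        ext <;> simp
      rw [hd] at h3
      have e1 : aeval (fun i => X (Sum.inl i)) f =
          (rename Sum.inl f : BiRing K m n) := by
        rw [← aeval_X_left_apply (rename Sum.inl f : BiRing K m n), aeval_rename]
        rfl
      have e2 : aeval (fun i => X (Sum.inr i)) g =
          (rename Sum.inr g : BiRing K m n) := by
        rw [← aeval_X_left_apply (rename Sum.inr g : BiRing K m n), aeval_rename]
        rfl
      rw [e1, e2] at h3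
      exact h3
    · rw [ev1]
      exact mul_ne_zero hfp hgp
    · intro r hr hrp
      rw [ev1]
      by_cases h1 : r.1 = p.1
      · have h2 : r.2 ≠ p.2 := fun h2 => hrp (Prod.ext h1 h2)
        rw [hgW r.2 ((mem_W K).2 (h1 ▸ hr)) h2, mul_zero]
      · by_cases h2 : r.2 = p.2
        · rw [hfV r.1 ((mem_V K).2 (h2 ▸ hr)) h1, zero_mul]
        · rcases hstar p hp r hr with h | h
          · rw [hgW r.2 ((mem_W K).2 h) h2, mul_zero]
          · rw [hfV r.1 ((mem_V K).2 h) h1, zero_mul]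

theorem main (𝕏 : Finset (BiPt K 1 n)) (hgood : GoodConfig K 𝕏)
    (hne : 𝕏.Nonempty) (hstar : StarProp K 𝕏) :
    HasCB K 𝕏 ↔
      (𝕏 = (𝕏.image Prod.fst) ×ˢ (𝕏.image Prod.snd) ∧
        IsCB1 K (𝕏.image Prod.snd)) := by
  rw [hasCB_iff]
  have hself1 : ∀ p ∈ 𝕏, p.1 ∈ Vset K 𝕏 p := fun p hp => (mem_V K).2 hp
  have hWprod : 𝕏 = (𝕏.image Prod.fst) ×ˢ (𝕏.image Prod.snd) →
      ∀ p ∈ 𝕏, Wset K 𝕏 p = 𝕏.image Prod.snd := by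
    intro hX p hp
    ext r
    rw [mem_W]
    constructor
    · intro h; exact Finset.mem_image.2 ⟨_, h, rfl⟩
    · intro h
      exact hX.symm.subset (Finset.mem_product.2 ⟨Finset.mem_image.2 ⟨p, hp, rfl⟩, h⟩)
  have hVprod : 𝕏 = (𝕏.image Prod.fst) ×ˢ (𝕏.image Prod.snd) →
      ∀ p ∈ 𝕏, Vset K 𝕏 p = 𝕏.image Prod.fst := by
    intro hX p hp
    ext r
    rw [mem_V]
    constructor
    · intro h; exact Finset.mem_image.2 ⟨_, h, rfl⟩
    · intro h
      exact hX.symm.subset (Finset.mem_product.2 ⟨h, Finset.mem_image.2 ⟨p, hp, rfl⟩⟩)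
  have hdesc : 𝕏 = (𝕏.image Prod.fst) ×ˢ (𝕏.image Prod.snd) → ∀ p ∈ 𝕏, ∀ d : ℤ × ℤ,
      d ∈ sepDegsB K 𝕏 p ↔ (((𝕏.image Prod.fst).card : ℤ) - 1 ≤ d.1 ∧
        (deg1 K (𝕏.image Prod.snd) p.2 : ℤ) ≤ d.2) := by
    intro hX p hp d
    rw [mem_sepDegs K hstar hp, sep1_P1 K (good_V K hgood p) (hself1 p hp), hVprod hX p hp,
      hWprod hX p hp, sep1_iff_deg1 K (good_2 K hgood) (Finset.mem_image_of_mem _ hp)]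
  constructor
  · intro hCB
    have hcard : ∀ p ∈ 𝕏, ∀ q ∈ 𝕏, (Vset K 𝕏 p).card ≤ (Vset K 𝕏 q).card := by
      intro p hp q hq
      have hWq : ∃ b, Sep1 K (Wset K 𝕏 q) q.2 b := by
        refine ⟨_, sep1_exists K ?_ ((mem_W K).2 hq)⟩
        constructor
        · intro r hr
          exact (hgood.1 _ ((mem_W K).1 hr)).2
        · intro r hr s hs
          exact hgood.2.2 _ ((mem_W K).1 hr) _ ((mem_W K).1 hs)
      obtain ⟨b, hb⟩ := hWq
      have h1 : (((Vset K 𝕏 q).card : ℤ) - 1, b) ∈ sepDegsB K 𝕏 q := by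
        rw [mem_sepDegs K hstar hq]
        exact ⟨(sep1_P1 K (good_V K hgood q) (hself1 q hq) _).2 le_rfl, hb⟩
      rw [← hCB p hp q hq, mem_sepDegs K hstar hp,
        sep1_P1 K (good_V K hgood p) (hself1 p hp)] at h1
      have := h1.1
      simp only at this
      omega
    have hsub : ∀ p ∈ 𝕏, ∀ q ∈ 𝕏, Vset K 𝕏 p ⊆ Vset K 𝕏 q := by
      intro p hp q hq
      by_cases h : Vset K 𝕏 q ⊆ Vset K 𝕏 p
      · exact (Finset.eq_of_subset_of_card_le h (hcard p hp q hq)).symm.subset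
      · obtain ⟨s, hsq, hsp⟩ := Finset.not_subset.1 h
        intro r hr
        rw [mem_V] at hsq hsp hr ⊢
        rcases hstar _ hr _ hsq with h | h
        · exact h
        · exact absurd h hsp
    have hX : 𝕏 = (𝕏.image Prod.fst) ×ˢ (𝕏.image Prod.snd) := by
      ext ⟨a, b⟩
      rw [Finset.mem_product]
      constructor
      · intro h
        exact ⟨Finset.mem_image_of_mem _ h, Finset.mem_image_of_mem _ h⟩
      · rintro ⟨h1, h2⟩
        obtain ⟨p, hp, rfl⟩ := Finset.mem_image.1 h1
        obtain ⟨q, hq, rfl⟩ := Finset.mem_image.1 h2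
        exact (mem_V K).1 (hsub p hp q hq (hself1 p hp))
    refine ⟨hX, ?_⟩
    have hdeg : ∀ p ∈ 𝕏, ∀ q ∈ 𝕏, deg1 K (𝕏.image Prod.snd) p.2 ≤
        deg1 K (𝕏.image Prod.snd) q.2 := by
      intro p hp q hq
      have h1 := (hdesc hX q hq (((𝕏.image Prod.fst).card : ℤ) - 1,
        (deg1 K (𝕏.image Prod.snd) q.2 : ℤ))).2 ⟨le_rfl, le_rfl⟩
      rw [← hCB p hp q hq, hdesc hX p hp] at h1
      exact Int.ofNat_le.1 h1.2
    intro y hy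
    obtain ⟨p, hp, rfl⟩ := Finset.mem_image.1 hy
    have hfull : ∀ i : ℕ, HF1 K (𝕏.image Prod.snd) (i : ℤ) = (𝕏.image Prod.snd).card ↔
        deg1 K (𝕏.image Prod.snd) p.2 ≤ i := by
      intro i
      rw [HF1_full]
      constructor
      · intro h
        have := (sep1_iff_deg1 K (good_2 K hgood) hy _).1 (h _ hy)
        exact_mod_cast this
      · intro h z hz
        rw [sep1_iff_deg1 K (good_2 K hgood) hz]
        obtain ⟨q, hq, rfl⟩ := Finset.mem_image.1 hz
        exact_mod_cast (hdeg q hq p hp).trans h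
    unfold regIndex1
    simp only [hfull]
    apply le_antisymm
    · apply le_csInf
      · exact ⟨_, fun i hi => hi⟩
      · intro r hr
        exact hr r le_rfl
    · exact Nat.sInf_le (fun i hi => hi)
  · rintro ⟨hX, hcb⟩ p hp q hq
    ext d
    rw [hdesc hX p hp, hdesc hX q hq, hcb _ (Finset.mem_image_of_mem _ hp),
      hcb _ (Finset.mem_image_of_mem _ hq)]

end

end CBAux

open MultiProjPoints in
/-- Proposition 5.5: if `𝕏 ⊆ P^1 × P^n` has the
`(⋆)`-property, then `𝕏` has the Cayley-Bacharach property iff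
`𝕏 = 𝕏₁ × 𝕏₂` and `𝕏₂ ⊆ P^n` is a Cayley-Bacharach scheme. -/
theorem statement_18 (K : Type) [Field K] [CharZero K] [DecidableEq K]
    (n : ℕ) (𝕏 : Finset (BiPt K 1 n)) (hgood : GoodConfig K 𝕏)
    (hne : 𝕏.Nonempty) (hstar : StarProp K 𝕏) :
    HasCB K 𝕏 ↔
      (𝕏 = (𝕏.image Prod.fst) ×ˢ (𝕏.image Prod.snd) ∧
        IsCB1 K (𝕏.image Prod.snd)) := by
  exact CBAux.main K 𝕏 hgood hne hstar
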